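/- arXiv:1107.4382 — 3 statements merged into one kernel-verified Lean document; each statement's English description precedes it below -/
import Mathlib

section
/- Let K ≥ 2 be an integer, σ² > 0, η_1, ..., η_K > 0, and β > 0. There exists a power profile (p_1, ..., p_K) with all p_i > 0 such that SINR_i = β for every player i if and only if (K-1)·β < 1; and in that case the profile is unique and given by p_i = (σ²/η_i)·β/(1 - (K-1)·β). -/
/-!
The SINR equations for a common target `β ≠ 0` involve the profile only through the received powers
`x i = p i * η i`. They say `x i * (1 + β) = β * (∑ j, x j + σ2)`; summing over the players and
eliminating the total power gives `x i * (1 - (K - 1) * β) = β * σ2`. This determines `x i`, and it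
forces `(K - 1) * β < 1` as soon as `x i`, `β` and `σ2` are positive.
-/

section Field

variable {ι 𝕜 : Type*} [Fintype ι] [Field 𝕜] {σ2 β : 𝕜} {η p : ι → 𝕜}

/-- The signal-to-interference-plus-noise ratio of player `i` under the power profile `p`, for noise
power `σ2` and channel gains `η`; it is `0` by convention if the denominator vanishes. -/
def sinr [DecidableEq ι] (σ2 : 𝕜) (η p : ι → 𝕜) (i : ι) : 𝕜 :=
  p i * η i / ((∑ j ∈ Finset.univ.erase i, p j * η j) + σ2)

/-- The power profile that gives every player the SINR `β`. It is meaningful only for nonzero gains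
`η i` and `(K - 1) * β ≠ 1`, where `K` is the number of players. -/
def commonSINRProfile (σ2 : 𝕜) (η : ι → 𝕜) (β : 𝕜) (i : ι) : 𝕜 :=
  σ2 / η i * (β / (1 - ((Fintype.card ι : 𝕜) - 1) * β))

theorem commonSINRProfile_mul_gain {i : ι} (hη : η i ≠ 0) :
    commonSINRProfile σ2 η β i * η i =
      σ2 * (β / (1 - ((Fintype.card ι : 𝕜) - 1) * β)) := by
  rw [commonSINRProfile, mul_right_comm, div_mul_cancel₀ _ hη]

variable [DecidableEq ι]

theorem mul_one_add_eq_of_sinr_eq {i : ι} (hβ : β ≠ 0) (h : sinr σ2 η p i = β) :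
    p i * η i * (1 + β) = β * ((∑ j, p j * η j) + σ2) := by
  have hdenom : (∑ j ∈ Finset.univ.erase i, p j * η j) + σ2 ≠ 0 := by
    intro h0
    exact hβ (by rw [← h, sinr, h0, div_zero])
  have hsignal := (div_eq_iff hdenom).1 h
  rw [Finset.sum_erase_eq_sub (Finset.mem_univ i)] at hsignal
  linear_combination hsignal

theorem mul_one_sub_eq_of_forall_sinr_eq (hβ : β ≠ 0) (hβ1 : 1 + β ≠ 0)
    (h : ∀ i, sinr σ2 η p i = β) (i : ι) :
    p i * η i * (1 - ((Fintype.card ι : 𝕜) - 1) * β) = β * σ2 := by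
  have hplayer (j : ι) := mul_one_add_eq_of_sinr_eq hβ (h j)
  have htotal : (∑ j, p j * η j) * (1 + β) =
      Fintype.card ι * (β * ((∑ j, p j * η j) + σ2)) := by
    rw [Finset.sum_mul, Finset.sum_congr rfl fun j _ ↦ hplayer j, Finset.sum_const,
      Finset.card_univ, nsmul_eq_mul]
  apply mul_right_cancel₀ hβ1
  linear_combination (1 - ((Fintype.card ι : 𝕜) - 1) * β) * hplayer i + β * htotal

theorem eq_commonSINRProfile_of_forall_sinr_eq (hη : ∀ i, η i ≠ 0) (hβ : β ≠ 0)
    (hβ1 : 1 + β ≠ 0) (hD : 1 - ((Fintype.card ι : 𝕜) - 1) * β ≠ 0)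
    (h : ∀ i, sinr σ2 η p i = β) : p = commonSINRProfile σ2 η β := by
  funext i
  rw [commonSINRProfile, div_mul_div_comm, eq_div_iff (mul_ne_zero (hη i) hD), ← mul_assoc,
    mul_one_sub_eq_of_forall_sinr_eq hβ hβ1 h i, mul_comm]

theorem sinr_commonSINRProfile (hσ : σ2 ≠ 0) (hη : ∀ i, η i ≠ 0)
    (hD : 1 - ((Fintype.card ι : 𝕜) - 1) * β ≠ 0) (i : ι) :
    sinr σ2 η (commonSINRProfile σ2 η β) i = β := by
  have hdenom : (∑ j ∈ Finset.univ.erase i, commonSINRProfile σ2 η β j * η j) + σ2 =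
      σ2 / (1 - ((Fintype.card ι : 𝕜) - 1) * β) := by
    simp only [commonSINRProfile_mul_gain (hη _)]
    rw [Finset.sum_erase_eq_sub (Finset.mem_univ i), Finset.sum_const, Finset.card_univ,
      nsmul_eq_mul, eq_div_iff hD]
    linear_combination ((Fintype.card ι : 𝕜) - 1) * σ2 * div_mul_cancel₀ β hD
  rw [sinr, hdenom, commonSINRProfile_mul_gain (hη i), ← mul_div_assoc,
    div_div_div_cancel_right₀ hD, mul_div_cancel_left₀ _ hσ]

end Field

section OrderedField

variable {ι 𝕜 : Type*} [Fintype ι] [Field 𝕜] [LinearOrder 𝕜] [IsStrictOrderedRing 𝕜]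
  {σ2 β : 𝕜} {η p : ι → 𝕜}

theorem commonSINRProfile_pos (hσ : 0 < σ2) (hη : ∀ i, 0 < η i) (hβ : 0 < β)
    (hlt : ((Fintype.card ι : 𝕜) - 1) * β < 1) (i : ι) : 0 < commonSINRProfile σ2 η β i :=
  mul_pos (div_pos hσ (hη i)) (div_pos hβ (sub_pos.2 hlt))

variable [DecidableEq ι]

theorem card_sub_one_mul_lt_one_of_forall_sinr_eq (hσ : 0 < σ2) (hη : ∀ i, 0 < η i)
    (hβ : 0 < β) (hp : ∀ i, 0 < p i) (h : ∀ i, sinr σ2 η p i = β) :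
    ((Fintype.card ι : 𝕜) - 1) * β < 1 := by
  rcases isEmpty_or_nonempty ι with _ | ⟨⟨i⟩⟩
  · rw [Fintype.card_eq_zero, Nat.cast_zero]
    linarith
  · have hprod : 0 < p i * η i * (1 - ((Fintype.card ι : 𝕜) - 1) * β) := by
      rw [mul_one_sub_eq_of_forall_sinr_eq hβ.ne' (by positivity) h i]
      positivity
    exact sub_pos.1 (pos_of_mul_pos_right hprod (mul_pos (hp i) (hη i)).le)

theorem exists_unique_profile_common_sinr_general (hσ : 0 < σ2) (hη : ∀ i, 0 < η i)
    (hβ : 0 < β) :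
    ((∃ p : ι → 𝕜, (∀ i, 0 < p i) ∧ ∀ i, sinr σ2 η p i = β) ↔
      ((Fintype.card ι : 𝕜) - 1) * β < 1) ∧
    (((Fintype.card ι : 𝕜) - 1) * β < 1 →
      ∀ p : ι → 𝕜, (∀ i, sinr σ2 η p i = β) → p = commonSINRProfile σ2 η β) := by
  have hη' (i : ι) : η i ≠ 0 := (hη i).ne'
  refine ⟨⟨?_, fun hlt ↦ ?_⟩, fun hlt p h ↦ ?_⟩
  · rintro ⟨p, hp, h⟩
    exact card_sub_one_mul_lt_one_of_forall_sinr_eq hσ hη hβ hp h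
  · exact ⟨commonSINRProfile σ2 η β, commonSINRProfile_pos hσ hη hβ hlt,
      sinr_commonSINRProfile hσ.ne' hη' (sub_pos.2 hlt).ne'⟩
  · exact eq_commonSINRProfile_of_forall_sinr_eq hη' hβ.ne' (by positivity) (sub_pos.2 hlt).ne' h

end OrderedField

/-- A positive power profile giving every player the common SINR `β > 0` exists
iff `(K-1)*β < 1`; and in that case it is unique, given by
`p_i = (σ²/η_i) * β / (1 - (K-1)*β)`. -/
theorem exists_unique_profile_common_sinr (K : ℕ) (hK : 2 ≤ K) (σ2 : ℝ) (hσ : 0 < σ2)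
    (η : Fin K → ℝ) (hη : ∀ i, 0 < η i) (β : ℝ) (hβ : 0 < β) :
    ((∃ p : Fin K → ℝ, (∀ i, 0 < p i) ∧
        ∀ i, p i * η i / ((∑ j ∈ Finset.univ.erase i, p j * η j) + σ2) = β)
      ↔ ((K : ℝ) - 1) * β < 1) ∧
    (((K : ℝ) - 1) * β < 1 →
      ∀ p : Fin K → ℝ, (∀ i, 0 < p i) →
        (∀ i, p i * η i / ((∑ j ∈ Finset.univ.erase i, p j * η j) + σ2) = β) →
        ∀ i, p i = σ2 / η i * (β / (1 - ((K : ℝ) - 1) * β))) := by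
  simpa only [sinr, funext_iff, commonSINRProfile, Fintype.card_fin] using
    (exists_unique_profile_common_sinr_general hσ hη hβ).imp_right
      fun huniq hlt p (_ : ∀ i, 0 < p i) ↦ huniq hlt p
end

section
/- Let a > 0, R > 0, η > 0 and I > 0 (the interference-plus-noise power seen by a player). Define h(p) = R·exp(-a·I/(p·η))/p for p > 0. Then h(p) → 0 as p → 0⁺, h(p) → 0 as p → ∞, and h attains a strict global maximum on (0,∞) at the unique point p* = a·I/η, with h(p*) = R·η/(e·a·I). (Hence a player's best response against fixed interference is the power making its own SINR equal to a.) -/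
/-!
With `c = a * I / η`, the utility at power `p` is `R * (exp (-c / p) / p)`, and in the variable
`x = c / p` this is `(R / c) * (x * exp (-x))`. At small power `x → ∞` and the exponential wins; at
large power the numerator stays bounded. Since `x < exp (x - 1)` unless `x = 1`, the maximum is
at `p = c`.
-/

open Filter Topology Real

lemma mul_exp_neg_lt_exp_neg_one {x : ℝ} (hx : x ≠ 1) : x * exp (-x) < exp (-1) := by
  have tangent_at_one : x < exp (x - 1) := by
    simpa only [sub_add_cancel] using add_one_lt_exp (sub_ne_zero.mpr hx)
  calc
    x * exp (-x) < exp (x - 1) * exp (-x) := by gcongr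
    _ = exp (-1) := by rw [← exp_add]; ring_nf

lemma exp_neg_div_div_lt_exp_neg_one_div {c p : ℝ} (hc : 0 < c) (hp : p ≠ 0) (hpc : p ≠ c) :
    exp (-c / p) / p < exp (-1) / c := by
  have ratio_ne_one : c / p ≠ 1 := fun h => hpc ((div_eq_one_iff_eq hp).mp h).symm
  calc
    exp (-c / p) / p = c / p * exp (-(c / p)) / c := by rw [neg_div]; field_simp
    _ < exp (-1) / c := by gcongr; exact mul_exp_neg_lt_exp_neg_one ratio_ne_one

lemma tendsto_exp_neg_div_div_pow_nhdsGT_zero {c : ℝ} (hc : 0 < c) (n : ℕ) :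
    Tendsto (fun p : ℝ => exp (-c / p) / p ^ n) (𝓝[>] 0) (𝓝 0) := by
  have h := (tendsto_rpow_mul_exp_neg_mul_atTop_nhds_zero n c hc).comp tendsto_inv_nhdsGT_zero
  refine h.congr fun p => ?_
  simp only [Function.comp_apply, rpow_natCast, inv_pow, div_eq_mul_inv, mul_comm]

lemma tendsto_exp_neg_div_div_pow_atTop (c : ℝ) {n : ℕ} (hn : n ≠ 0) :
    Tendsto (fun p : ℝ => exp (-c / p) / p ^ n) atTop (𝓝 0) :=
  ((continuous_exp.tendsto 0).comp (tendsto_const_nhds.div_atTop tendsto_id)).div_atTop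
    (tendsto_pow_atTop hn)

/-- For `a, R, η, I > 0`, the utility `h p = R * exp (-a*I/(p*η)) / p` tends to `0`
as `p → 0⁺` and as `p → ∞`, and attains a strict global maximum on `(0,∞)` at the
unique point `p* = a*I/η`, with value `h p* = R*η/(e*a*I)`. -/
theorem best_response_utility (a R η I : ℝ) (ha : 0 < a) (hR : 0 < R) (hη : 0 < η)
    (hI : 0 < I) :
    Filter.Tendsto (fun p : ℝ => R * Real.exp (-(a * I) / (p * η)) / p)
      (nhdsWithin 0 (Set.Ioi 0)) (nhds 0) ∧
    Filter.Tendsto (fun p : ℝ => R * Real.exp (-(a * I) / (p * η)) / p)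
      Filter.atTop (nhds 0) ∧
    R * Real.exp (-(a * I) / ((a * I / η) * η)) / (a * I / η)
      = R * η / (Real.exp 1 * a * I) ∧
    ∀ p : ℝ, 0 < p → p ≠ a * I / η →
      R * Real.exp (-(a * I) / (p * η)) / p < R * η / (Real.exp 1 * a * I) := by
  set c := a * I / η with hc_def
  have hc : 0 < c := by positivity
  have utility_eq (p : ℝ) :
      R * Real.exp (-(a * I) / (p * η)) / p = R * (exp (-c / p) / p) := by
    rw [mul_div_assoc, mul_comm p, ← div_div, neg_div η]
  have max_eq : R * η / (Real.exp 1 * a * I) = R * (exp (-1) / c) := by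
    rw [hc_def, exp_neg]
    field_simp
  simp only [utility_eq, max_eq]
  refine ⟨?_, ?_, ?_, fun p hp hpc => ?_⟩
  · simpa only [pow_one, mul_zero] using
      (tendsto_exp_neg_div_div_pow_nhdsGT_zero hc 1).const_mul R
  · simpa only [pow_one, mul_zero] using
      (tendsto_exp_neg_div_div_pow_atTop c one_ne_zero).const_mul R
  · rw [neg_div, div_self hc.ne']
  · exact mul_lt_mul_of_pos_left (exp_neg_div_div_lt_exp_neg_one_div hc hp.ne' hpc) hR
end

section
/- Let K ≥ 1, a > 0, R > 0, σ² > 0 and η_1, ..., η_K > 0. Suppose (p_1, ..., p_K) ∈ (0,∞)^K is a Nash equilibrium of the one-shot game, i.e., for every player i, p_i maximizes p ↦ R·exp(-a·(Σ_{j≠i} p_j·η_j + σ²)/(p·η_i))/p over p > 0. Then the SINR of every player at this profile equals a, i.e., p_i·η_i/(Σ_{j≠i} p_j·η_j + σ²) = a for all i. -/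
/-!
At an equilibrium each player's power is an interior maximum of its own utility with the
interference held fixed, and the first-order condition there is exactly `SINR = a`.
-/

/-- The energy efficiency `R * f(q * g / N) / q` of a player transmitting with power `q` over a
channel of gain `g` against interference-plus-noise power `N`, for the efficiency function
`f(γ) = exp (-a / γ)`. -/
noncomputable def energyEfficiency (R a g N q : ℝ) : ℝ :=
  R * Real.exp (-(a * N) / (q * g)) / q

section BestResponse

variable {R a g N q : ℝ}

theorem hasDerivAt_energyEfficiency (hg : g ≠ 0) (hq : q ≠ 0) :
    HasDerivAt (energyEfficiency R a g N)
      (R * Real.exp (-(a * N) / (q * g)) * (a * N - q * g) / (q ^ 3 * g)) q := by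
  have denominator_deriv : HasDerivAt (fun x : ℝ => x * g) g q := hasDerivAt_mul_const g
  have exponent_deriv :
      HasDerivAt (fun x : ℝ => -(a * N) / (x * g)) (a * N / (q ^ 2 * g)) q :=
    ((hasDerivAt_const q (-(a * N))).fun_div denominator_deriv (mul_ne_zero hq hg)).congr_deriv
      (by field_simp; ring)
  exact ((exponent_deriv.exp.const_mul R).fun_div (hasDerivAt_id' q) hq).congr_deriv
    (by field_simp)

theorem mul_gain_eq_of_isLocalExtr_energyEfficiency (hR : R ≠ 0) (hg : g ≠ 0) (hq : q ≠ 0)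
    (hextr : IsLocalExtr (energyEfficiency R a g N) q) : q * g = a * N := by
  have deriv_eq_zero := hextr.hasDerivAt_eq_zero (hasDerivAt_energyEfficiency hg hq)
  have numerator_eq_zero : a * N - q * g = 0 := by
    simpa [hR, hg, hq, Real.exp_ne_zero] using deriv_eq_zero
  exact (sub_eq_zero.mp numerator_eq_zero).symm

theorem sinr_eq_of_isLocalExtr_energyEfficiency (hR : R ≠ 0) (hg : g ≠ 0) (hq : q ≠ 0)
    (hextr : IsLocalExtr (energyEfficiency R a g N) q) : q * g / N = a := by
  have hqg : q * g = a * N := mul_gain_eq_of_isLocalExtr_energyEfficiency hR hg hq hextr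
  have hN : N ≠ 0 := right_ne_zero_of_mul (hqg ▸ mul_ne_zero hq hg)
  exact (div_eq_iff hN).mpr hqg

end BestResponse

theorem nash_equilibrium_sinr_eq_general {ι : Type*} [Fintype ι] [DecidableEq ι]
    {a R σ2 : ℝ} (hR : R ≠ 0) {η p : ι → ℝ} (hη : ∀ i, η i ≠ 0) (hp : ∀ i, p i ≠ 0)
    (hextr : ∀ i, IsLocalExtr
      (energyEfficiency R a (η i) ((∑ j ∈ Finset.univ.erase i, p j * η j) + σ2)) (p i)) :
    ∀ i, p i * η i / ((∑ j ∈ Finset.univ.erase i, p j * η j) + σ2) = a :=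
  fun i => sinr_eq_of_isLocalExtr_energyEfficiency hR (hη i) (hp i) (hextr i)

/-- At any positive Nash equilibrium of the one-shot energy-efficiency game
(each `p i` maximizes `q ↦ R * exp (-a*(I_i + σ²)/(q*η_i)) / q` over `q > 0`,
where `I_i` is the interference seen by player `i`), the SINR of every player
equals `a`. -/
theorem nash_equilibrium_sinr_eq (K : ℕ) (hK : 1 ≤ K) (a R σ2 : ℝ) (ha : 0 < a)
    (hR : 0 < R) (hσ : 0 < σ2) (η : Fin K → ℝ) (hη : ∀ i, 0 < η i)
    (p : Fin K → ℝ) (hp : ∀ i, 0 < p i)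
    (hNash : ∀ i, ∀ q : ℝ, 0 < q →
      R * Real.exp (-(a * ((∑ j ∈ Finset.univ.erase i, p j * η j) + σ2)) / (q * η i)) / q
        ≤ R * Real.exp
            (-(a * ((∑ j ∈ Finset.univ.erase i, p j * η j) + σ2)) / (p i * η i)) / p i) :
    ∀ i, p i * η i / ((∑ j ∈ Finset.univ.erase i, p j * η j) + σ2) = a :=
  nash_equilibrium_sinr_eq_general hR.ne' (fun i => (hη i).ne') (fun i => (hp i).ne') fun i =>
    have hmax : IsMaxOn (energyEfficiency R a (η i) _) (Set.Ioi 0) (p i) := hNash i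
    .inr (hmax.isLocalMax (Ioi_mem_nhds (hp i)))
end
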